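/- For the planar Fadell–Neuwirth fibration p : F(ℝ², m+n) → F(ℝ², m) with m ≥ 2, n ≥ 1 and r ≥ 2, one has TC_r[p] = rn + m − 2. -/

import Mathlib

open Set unitInterval

universe u v

/-- `HasSecatLE p k`: the base admits an open cover by `k+1` sets,
each admitting a continuous local section of `p`. -/
def HasSecatLE {E : Type u} {B : Type v} [TopologicalSpace E] [TopologicalSpace B]
    (p : E → B) (k : ℕ) : Prop :=
  ∃ U : Fin (k + 1) → Set B, (∀ i, IsOpen (U i)) ∧ (⋃ i, U i) = Set.univ ∧
    ∀ i, ∃ s : C(U i, E), ∀ x : U i, p (s x) = (x : B)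

/-- The sectional category (Schwarz genus) of a map, valued in `ℕ∞`. -/
noncomputable def secat {E : Type u} {B : Type v} [TopologicalSpace E] [TopologicalSpace B]
    (p : E → B) : ℕ∞ :=
  ⨅ k ∈ {k : ℕ | HasSecatLE p k}, (k : ℕ∞)

/-- A Hurewicz fibration: a continuous map with the homotopy lifting property
with respect to all spaces. -/
def IsHurewiczFibration {E : Type u} {B : Type v} [TopologicalSpace E] [TopologicalSpace B]
    (p : E → B) : Prop :=
  Continuous p ∧
    ∀ (Z : Type (max u v)) [TopologicalSpace Z] (H : C(Z × unitInterval, B)) (h : C(Z, E)),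
      (∀ z, p (h z) = H (z, 0)) →
        ∃ H' : C(Z × unitInterval, E), (∀ z, H' (z, 0) = h z) ∧ ∀ q, p (H' q) = H q

/-- The standard time schedule `t_i = i/(r-1)`, `i = 0, …, r-1` in `[0,1]`. -/
noncomputable def schedule (r : ℕ) (i : Fin r) : unitInterval :=
  Set.projIcc 0 1 zero_le_one ((i : ℝ) / ((r : ℝ) - 1))

/-- The space `E^I_B` of paths in `E` along which `p` is constant. -/
def FibConstPath {E : Type u} {B : Type v} [TopologicalSpace E] [TopologicalSpace B]
    (p : E → B) : Set C(unitInterval, E) :=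
  {α | ∀ s t, p (α s) = p (α t)}

/-- The space `E^r_B` of `r`-tuples in `E` lying in a common fibre of `p`. -/
def ParamSpace {E : Type u} {B : Type v} [TopologicalSpace E] [TopologicalSpace B]
    (p : E → B) (r : ℕ) : Set (Fin r → E) :=
  {e | ∀ i j, p (e i) = p (e j)}

/-- The evaluation fibration `Π_r : E^I_B → E^r_B`. -/
noncomputable def paramEval {E : Type u} {B : Type v} [TopologicalSpace E] [TopologicalSpace B]
    (p : E → B) (r : ℕ) (α : FibConstPath p) : ParamSpace p r :=
  ⟨fun i => α.1 (schedule r i), fun _ _ => α.2 _ _⟩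

/-- The `r`-th sequential parametrized topological complexity `TC_r[p : E → B]`. -/
noncomputable def seqParamTC {E : Type u} {B : Type v} [TopologicalSpace E] [TopologicalSpace B]
    (p : E → B) (r : ℕ) : ℕ∞ :=
  secat (paramEval p r)

/-- The `r`-th sequential topological complexity `TC_r(X)` of a space. -/
noncomputable def seqTC (X : Type u) [TopologicalSpace X] (r : ℕ) : ℕ∞ :=
  secat (fun (α : C(unitInterval, X)) (i : Fin r) => α (schedule r i))

/-- `HasCatLE Y k`: `Y` admits an open cover by `k+1` sets each contractible in `Y`. -/
def HasCatLE (Y : Type u) [TopologicalSpace Y] (k : ℕ) : Prop :=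
  ∃ U : Fin (k + 1) → Set Y, (∀ i, IsOpen (U i)) ∧ (⋃ i, U i) = Set.univ ∧
    ∀ i, ∃ (H : C((U i) × unitInterval, Y)) (y : Y),
      (∀ x, H (x, 0) = (x.1 : Y)) ∧ (∀ x, H (x, 1) = y)

/-- The Lusternik–Schnirelmann category of a space, valued in `ℕ∞`. -/
noncomputable def LScat (Y : Type u) [TopologicalSpace Y] : ℕ∞ :=
  ⨅ k ∈ {k : ℕ | HasCatLE Y k}, (k : ℕ∞)

/-- The ordered configuration space `F(ℝ^d, N)` of `N` distinct points in `ℝ^d`. -/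
abbrev Conf (d N : ℕ) : Type :=
  {u : Fin N → EuclideanSpace ℝ (Fin d) // Function.Injective u}

/-- The Fadell–Neuwirth fibration `F(ℝ^d, m+n) → F(ℝ^d, m)` forgetting the last `n` points. -/
def fnProj (d m n : ℕ) (u : Conf d (m + n)) : Conf d m :=
  ⟨fun i => u.1 (Fin.castAdd n i), fun a b h => by
    have h2 : Fin.castAdd n a = Fin.castAdd n b := u.2 h
    exact Fin.ext (by simpa using congrArg Fin.val h2)⟩


namespace TCB

section alg
variable {ι L Λ : Type} [Fintype ι] [DecidableEq ι] [AddCommGroup L] [Fintype L]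
  [Ring Λ] [Algebra ℝ Λ]

/-- discrete cup product with a 1-cochain -/
def opA (b : ι → L) (e : ι → Λ) (c : L → ι → ℝ) (ω : L → Λ) (z : L) : Λ :=
  ∑ i, c z i • (e i * ω (z + b i))

/-- discrete differential -/
def dd (b : ι → L) (e : ι → Λ) (ω : L → Λ) (z : L) : Λ :=
  ∑ i, e i * (ω (z + b i) - ω z)

lemma antisymm_sum (e : ι → Λ) (he : ∀ i j, e i * e j = - (e j * e i))
    (S : ι → ι → Λ) (hS : ∀ i j, S i j = S j i) :
    ∑ i, ∑ j, e i * e j * S i j = 0 := by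
  have h : ∑ i, ∑ j, e i * e j * S i j = - ∑ i, ∑ j, e i * e j * S i j := by
    conv_lhs => rw [Finset.sum_comm]
    rw [← Finset.sum_neg_distrib]
    refine Finset.sum_congr rfl fun i _ => ?_
    rw [← Finset.sum_neg_distrib]
    refine Finset.sum_congr rfl fun j _ => ?_
    rw [he j i, hS j i, neg_mul]
  have h2 : (2:ℝ) • ∑ i, ∑ j, e i * e j * S i j = 0 := by
    rw [two_smul]; nth_rewrite 2 [h]; exact add_neg_cancel _
  exact (smul_eq_zero.1 h2).resolve_left two_ne_zero

lemma dd_opA (b : ι → L) (e : ι → Λ) (he : ∀ i j, e i * e j = - (e j * e i))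
    (c : L → ι → ℝ) (hc : ∀ z i j, c z i + c (z + b i) j = c z j + c (z + b j) i)
    (ω : L → Λ) (hω : ∀ z, dd b e ω z = 0) (z : L) : dd b e (opA b e c ω) z = 0 := by
  have h1 : dd b e (opA b e c ω) z + ∑ i, c z i • (e i * dd b e ω (z + b i)) =
      ∑ i, ∑ j, e i * e j * ((c z i + c (z + b i) j) • ω (z + b i + b j))
      - ∑ i, ∑ j, e i * e j * (c z i • ω (z + b i) + c z j • ω (z + b j)) := by
    unfold dd opA
    rw [← Finset.sum_add_distrib, ← Finset.sum_sub_distrib]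
    refine Finset.sum_congr rfl fun i _ => ?_
    rw [mul_sub, Finset.mul_sum, Finset.mul_sum, Finset.mul_sum,
      Finset.smul_sum, ← Finset.sum_sub_distrib, ← Finset.sum_sub_distrib, ← Finset.sum_add_distrib]
    refine Finset.sum_congr rfl fun j _ => ?_
    simp only [mul_sub, mul_add, add_smul, smul_sub, mul_smul_comm, mul_assoc]
    abel
  simp only [hω, mul_zero, smul_zero, Finset.sum_const_zero, add_zero] at h1
  rw [h1, antisymm_sum e he, antisymm_sum e he, sub_zero]
  · intro i j; rw [add_comm]
  · intro i j; rw [hc, add_right_comm]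

/-- the cochain `dG_l` -/
def coc (b : ι → L) (δ : ℝ) (h : ι → L → ℝ) (l : ι) (z : L) (i : ι) : ℝ :=
  (if i = l then δ else 0) + (h l (z + b i) - h l z)

lemma sum_opA (b : ι → L) (e : ι → Λ) (δ : ℝ) (h : ι → L → ℝ) (l : ι)
    (ω : L → Λ) (hω : ∀ z, dd b e ω z = 0) :
    ∑ z, opA b e (coc b δ h l) ω z = δ • (e l * ∑ z, ω z) := by
  have key : ∀ z, opA b e (coc b δ h l) ω z = δ • (e l * ω (z + b l)) +
      ∑ i, e i * (h l (z + b i) • ω (z + b i) - h l z • ω z) := by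
    intro z
    have h2 : ∑ i, e i * (h l (z + b i) • ω (z + b i) - h l z • ω z)
       = ∑ i, (h l (z + b i) - h l z) • (e i * ω (z + b i)) := by
      have : ∑ i, e i * (h l (z + b i) • ω (z + b i) - h l z • ω z) - h l z • dd b e ω z
       = ∑ i, (h l (z + b i) - h l z) • (e i * ω (z + b i)) := by
        unfold dd
        rw [Finset.smul_sum, ← Finset.sum_sub_distrib]
        refine Finset.sum_congr rfl fun i _ => ?_
        simp only [mul_sub, smul_sub, sub_smul, mul_smul_comm]
        abel
      rw [← this, hω, smul_zero, sub_zero]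
    rw [h2]
    simp only [opA, coc, add_smul, Finset.sum_add_distrib, ite_smul, zero_smul,
      Finset.sum_ite_eq', Finset.mem_univ, if_true]
  simp only [key, Finset.sum_add_distrib]
  have h0 : ∀ (f : L → Λ) (a : L), ∑ z, f (z + a) = ∑ z, f z := fun f a =>
    Equiv.sum_comp (Equiv.addRight a) f
  have h3 : ∀ i, ∑ z, e i * (h l (z + b i) • ω (z + b i) - h l z • ω z) = 0 := by
    intro i
    rw [← Finset.mul_sum, Finset.sum_sub_distrib, h0 (fun z => h l z • ω z), sub_self, mul_zero]
  have h4 : ∑ z, ∑ i, e i * (h l (z + b i) • ω (z + b i) - h l z • ω z) = 0 := by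
    rw [Finset.sum_comm]
    simp only [h3, Finset.sum_const_zero]
  rw [h4, add_zero, ← Finset.smul_sum, ← Finset.mul_sum, h0]

/-- iterated cup product -/
def cup (b : ι → L) (e : ι → Λ) (δ : ℝ) (h : ι → L → ℝ) : List ι → L → Λ
  | [] => fun _ => 1
  | l :: ls => opA b e (coc b δ h l) (cup b e δ h ls)

lemma dd_cup (b : ι → L) (e : ι → Λ) (he : ∀ i j, e i * e j = - (e j * e i)) (δ : ℝ)
    (h : ι → L → ℝ) (ls : List ι) : ∀ z, dd b e (cup b e δ h ls) z = 0 := by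
  induction ls with
  | nil => intro z; simp [dd, cup]
  | cons l ls ih =>
    intro z
    refine dd_opA b e he _ ?_ _ ih z
    intro z i j
    simp only [coc]
    rw [add_right_comm z (b i) (b j)]
    ring

lemma sum_cup (b : ι → L) (e : ι → Λ) (he : ∀ i j, e i * e j = - (e j * e i)) (δ : ℝ)
    (h : ι → L → ℝ) (ls : List ι) : ∑ z, cup b e δ h ls z =
      (δ ^ ls.length * Fintype.card L) • (ls.map e).prod := by
  induction ls with
  | nil => simp [cup, Algebra.smul_def]
  | cons l ls ih =>
    simp only [cup]
    rw [sum_opA _ _ _ _ _ _ (dd_cup b e he δ h ls), ih]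
    simp only [List.length_cons, List.map_cons, List.prod_cons, mul_smul_comm, smul_smul]
    congr 1; ring

lemma cup_zero (b : ι → L) (e : ι → Λ) (δ : ℝ) (h : ι → L → ℝ) (l : ι) (ls : List ι) :
    l ∈ ls → ∀ z : L,
    (∀ v : ι → ℕ, (∀ i, v i ≤ ls.length) → ∀ i, coc b δ h l (z + ∑ j, v j • b j) i = 0) →
      cup b e δ h ls z = 0 := by
  induction ls with
  | nil => intro h; simp at h
  | cons l' ls ih =>
    intro hl z hz
    simp only [cup, opA]
    rcases List.mem_cons.1 hl with rfl | hl
    · have := hz 0 (by simp)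
      simp only [Pi.zero_apply, zero_smul, Finset.sum_const_zero, add_zero] at this
      simp [this]
    · refine Finset.sum_eq_zero fun i _ => ?_
      rw [ih hl (z + b i), mul_zero, smul_zero]
      intro v hv k
      have := hz (v + Pi.single i 1) (fun j => by
        have := hv j
        have h2 : (Pi.single i 1 : ι → ℕ) j ≤ 1 := by
          by_cases hj : j = i
          · subst hj; simp
          · simp [hj]
        simp only [Pi.add_apply, List.length_cons]; omega) k
      rw [← this]
      congr 1
      simp only [Pi.add_apply, add_smul, Finset.sum_add_distrib]
      have : ∑ j, (Pi.single i 1 : ι → ℕ) j • b j = b i := by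
        rw [Finset.sum_eq_single i]
        · simp
        · intro j _ hj; simp [hj]
        · simp
      rw [this]; abel

end alg

lemma ext_prod_ne_zero (K : ℕ) :
    ((List.finRange K).map fun i => ExteriorAlgebra.ι ℝ (Pi.single i 1 : Fin K → ℝ)).prod ≠ 0 := by
  intro h
  have h1 : ExteriorAlgebra.ιMulti ℝ K (fun i => (Pi.single i 1 : Fin K → ℝ)) = 0 := by
    rw [ExteriorAlgebra.ιMulti_apply, List.ofFn_eq_map, h]
  have h2 := ExteriorAlgebra.liftAlternating_apply_ιMulti (R := ℝ)
    (fun i => if hi : i = K then (Matrix.detRowAlternating (n := Fin K) (R := ℝ)).domDomCongr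
      (finCongr hi.symm) else 0)
    (fun i => (Pi.single i 1 : Fin K → ℝ))
  rw [h1] at h2
  simp only [map_zero, dite_true] at h2
  have h3 : (Matrix.of fun i => (Pi.single i 1 : Fin K → ℝ)) = 1 := by
    ext i j; simp [Matrix.one_apply, Pi.single_apply, eq_comm]
  have h4 : Matrix.det (Matrix.of fun i => (Pi.single i 1 : Fin K → ℝ)) = 0 := h2.symm
  rw [h3, Matrix.det_one] at h4
  exact one_ne_zero h4

/-- Discrete obstruction. -/
lemma discrete_obstr (K N : ℕ) [NeZero N] (δ : ℝ) (hδ : δ ≠ 0) (h : Fin K → (Fin K → ZMod N) → ℝ)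
    (H : ∀ z : Fin K → ZMod N, ∃ l : Fin K, ∀ v : Fin K → ℕ, (∀ i, v i ≤ K) → ∀ i,
      (if i = l then δ else 0) + (h l (z + (fun j => (v j : ZMod N)) + Pi.single i 1)
        - h l (z + fun j => (v j : ZMod N))) = 0) : False := by
  let b : Fin K → (Fin K → ZMod N) := fun i => Pi.single i 1
  let e := fun i => ExteriorAlgebra.ι ℝ (Pi.single i 1 : Fin K → ℝ)
  have he : ∀ i j, e i * e j = - (e j * e i) := fun i j =>
    eq_neg_of_add_eq_zero_left (ExteriorAlgebra.ι_add_mul_swap _ _)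
  have h1 := sum_cup b e he δ h (List.finRange K)
  have h2 : ∀ z, cup b e δ h (List.finRange K) z = 0 := by
    intro z
    obtain ⟨l, hl⟩ := H z
    refine cup_zero b e δ h l _ (List.mem_finRange l) z ?_
    intro v hv i
    have h3 : ∑ j, v j • b j = fun j => (v j : ZMod N) := by
      ext k
      simp only [Finset.sum_apply, Pi.smul_apply, b]
      rw [Finset.sum_eq_single k]
      · simp
      · intro j _ hj; simp [hj.symm]
      · simp
    rw [h3]
    exact hl v (by simpa using hv) i
  simp only [h2, Finset.sum_const_zero] at h1
  have h5 := (smul_eq_zero.1 h1.symm).resolve_right (ext_prod_ne_zero K)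
  have : (Fintype.card (Fin K → ZMod N) : ℝ) ≠ 0 := by
    exact_mod_cast Fintype.card_ne_zero
  exact (mul_ne_zero (pow_ne_zero _ hδ) this) h5
end TCB
namespace TCB

lemma const_of_exp {X : Type} [TopologicalSpace X] {s : Set X} (hs : IsPreconnected s) (f : X → ℝ)
    (hf : ContinuousOn f s) (h : ∀ x ∈ s, Circle.exp (f x) = 1) {x y : X} (hx : x ∈ s)
    (hy : y ∈ s) : f x = f y := by
  refine hs.constant_of_mapsTo (T := (AddSubgroup.zmultiples (2 * Real.pi) : Set ℝ)) ⟨(inferInstance : DiscreteTopology (AddSubgroup.zmultiples (2 * Real.pi)))⟩ hf ?_ hx hy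
  intro z hz
  obtain ⟨n, hn⟩ := Circle.exp_eq_one.1 (h z hz)
  refine AddSubgroup.mem_zmultiples_iff.2 ⟨n, ?_⟩
  rw [hn]; simp

lemma circle_per (N : ℕ) [NeZero N] (a b : ℕ) (hab : (a : ZMod N) = b) :
    Circle.exp (2 * Real.pi / N * a) = Circle.exp (2 * Real.pi / N * b) := by
  have hN : (N : ℝ) ≠ 0 := by exact_mod_cast NeZero.ne N
  have : ((a : ℤ) : ZMod N) = ((b : ℤ) : ZMod N) := by exact_mod_cast hab
  obtain ⟨k, hk⟩ := (ZMod.intCast_eq_intCast_iff_dvd_sub _ _ _).1 this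
  have h2 : (b : ℝ) = a + N * k := by
    have : (b : ℤ) = a + N * k := by linarith
    exact_mod_cast this
  rw [h2, Circle.exp_eq_exp]
  refine ⟨-k, ?_⟩
  push_cast
  field_simp
  ring

lemma torus_obstr (K : ℕ) (V : Fin K → Set (Fin K → Circle)) (hV : ∀ l, IsOpen (V l))
    (hcov : ∀ x, ∃ l, x ∈ V l) (φ : ∀ l, V l → ℝ) (hφ : ∀ l, Continuous (φ l))
    (hexp : ∀ l (x : V l), Circle.exp (φ l x) = x.1 l) : False := by
  classical
  let E : (Fin K → ℝ) → (Fin K → Circle) := fun y j => Circle.exp (y j)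
  have hE : Continuous E := by
    refine continuous_pi fun j => ?_
    exact Circle.exp.continuous.comp (continuous_apply j)
  obtain ⟨ρ, hρ, hleb⟩ := lebesgue_number_lemma_of_metric
    (isCompact_Icc (a := (fun _ => 0 : Fin K → ℝ)) (b := fun _ => 2 * Real.pi))
    (fun l => (hV l).preimage hE) (fun y _ => by
      obtain ⟨l, hl⟩ := hcov (E y)
      exact Set.mem_iUnion.2 ⟨l, hl⟩)
  obtain ⟨N, hN⟩ := exists_nat_gt (2 * Real.pi * (K + 2) / ρ)
  have hpi := Real.pi_pos
  have hN0 : (0 : ℝ) < N := lt_of_le_of_lt (by positivity) hN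
  have hN1 : N ≠ 0 := by rintro rfl; simp at hN0
  have : NeZero N := ⟨hN1⟩
  set st : ℝ := 2 * Real.pi / N with hst
  have hst0 : 0 < st := by positivity
  have hstK : st * (K + 2) < ρ := by
    rw [div_lt_iff₀ hρ] at hN
    rw [hst, div_mul_eq_mul_div, div_lt_iff₀ hN0]; linarith
  let pt : (Fin K → ZMod N) → (Fin K → ℝ) := fun z j => st * ((z j).val : ℝ)
  refine discrete_obstr K N st hst0.ne'
    (fun l z => if hz : E (pt z) ∈ V l then - φ l ⟨_, hz⟩ else 0) ?_
  intro z
  obtain ⟨l, hl⟩ := hleb (pt z) (by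
    constructor
    · intro j; simp only [pt]; positivity
    · intro j
      simp only [pt]
      have : ((z j).val : ℝ) ≤ N := by exact_mod_cast (ZMod.val_lt (z j)).le
      calc st * ((z j).val : ℝ) ≤ st * N := by gcongr
        _ = 2 * Real.pi := by rw [hst]; field_simp)
  have hl' : ∀ y ∈ Metric.ball (pt z) ρ, E y ∈ V l := fun y hy => hl hy
  refine ⟨l, ?_⟩
  -- the lifted function
  let F : (Fin K → ℝ) → ℝ := fun y => if hy : E y ∈ V l then φ l ⟨_, hy⟩ else 0
  have hF : ContinuousOn F (Metric.ball (pt z) ρ) := by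
    rw [continuousOn_iff_continuous_domRestrict]
    have : (Metric.ball (pt z) ρ).domRestrict F =
        fun y => φ l ⟨E y.1, hl' y.1 y.2⟩ := by
      ext y
      simp only [Set.domRestrict_apply, F]
      rw [dif_pos (hl' y.1 y.2)]
    rw [this]
    exact (hφ l).comp (Continuous.subtype_mk (hE.comp continuous_subtype_val) _)
  have hball : IsPreconnected (Metric.ball (pt z) ρ) := (convex_ball _ _).isPreconnected
  have hconst : ∀ y ∈ Metric.ball (pt z) ρ, ∀ y' ∈ Metric.ball (pt z) ρ,
      F y - y l = F y' - y' l := by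
    intro y hy y' hy'
    refine const_of_exp hball (fun y => F y - y l) (hF.sub (continuous_apply l).continuousOn) ?_
      hy hy'
    intro w hw
    have := hexp l ⟨E w, hl' w hw⟩
    simp only [F]
    rw [dif_pos (hl' w hw), Circle.exp_sub, this]
    simp [E]
  -- points of the lattice
  let q : (Fin K → ℕ) → (Fin K → ℝ) := fun v j => pt z j + st * v j
  have hq : ∀ v : Fin K → ℕ, (∀ i, v i ≤ K + 1) → q v ∈ Metric.ball (pt z) ρ := by
    intro v hv
    rw [Metric.mem_ball, dist_pi_lt_iff hρ]
    intro j
    simp only [q, Real.dist_eq, add_sub_cancel_left]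
    rw [abs_of_nonneg (by positivity)]
    have : (v j : ℝ) ≤ K + 1 := by exact_mod_cast hv j
    nlinarith
  have hEq : ∀ v : Fin K → ℕ, E (pt (z + fun j => (v j : ZMod N))) = E (q v) := by
    intro v
    ext j
    simp only [E, pt, q, Pi.add_apply]
    rw [← mul_add, ← Nat.cast_add, circle_per N _ ((z j).val + v j)]
    simp
  have hval : ∀ v : Fin K → ℕ, (∀ i, v i ≤ K + 1) →
      (if hz : E (pt (z + fun j => (v j : ZMod N))) ∈ V l then - φ l ⟨_, hz⟩ else 0) =
        - F (q v) := by
    intro v hv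
    have h1 := hl' _ (hq v hv)
    have h2 : E (pt (z + fun j => (v j : ZMod N))) ∈ V l := by rw [hEq]; exact h1
    simp only [F]
    rw [dif_pos h1, dif_pos h2]
    congr 2
    exact Subtype.ext (hEq v)
  intro v hv i
  have e1 : z + (fun j => (v j : ZMod N)) + Pi.single i 1 =
      z + fun j => (((v + Pi.single i 1 : Fin K → ℕ) j : ℕ) : ZMod N) := by
    ext j
    by_cases hj : j = i
    · subst hj; simp [add_assoc]
    · simp [hj]
  have hv1 : ∀ j, v j ≤ K + 1 := fun j => (hv j).trans (Nat.le_succ K)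
  have hv2 : ∀ j, (v + Pi.single i 1 : Fin K → ℕ) j ≤ K + 1 := by
    intro j
    by_cases hj : j = i
    · subst hj; simpa using hv j
    · simpa [hj] using hv1 j
  simp only [e1]
  rw [hval _ hv1, hval _ hv2]
  have := hconst _ (hq _ hv1) _ (hq _ hv2)
  have hq1 : q (v + Pi.single i 1) l = q v l + (if i = l then st else 0) := by
    by_cases hi : i = l
    · subst hi; simp only [q, Pi.add_apply, Pi.single_eq_same, Nat.cast_add, Nat.cast_one, if_true]
      ring
    · have hi' : l ≠ i := fun h => hi h.symm
      simp only [q, Pi.add_apply, Pi.single_eq_of_ne hi', add_zero, if_neg hi]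
  linarith
end TCB
namespace TCB

/-- existence of a continuous argument of a coordinate on a subset of a torus -/
def HasLog {ι : Type} (V : Set (ι → Circle)) (c : ι) : Prop :=
  ∃ φ : V → ℝ, Continuous φ ∧ ∀ x : V, Circle.exp (φ x) = x.1 c

lemma torus_obstr' {ι : Type} [Fintype ι] (k : ℕ) (hk : k + 1 ≤ Fintype.card ι)
    (V : Fin (k + 1) → Set (ι → Circle)) (hV : ∀ l, IsOpen (V l))
    (hcov : ∀ x, ∃ l, x ∈ V l) (hlog : ∀ l c, HasLog (V l) c) : False := by
  classical
  let E := Fintype.equivFin ι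
  let R : (Fin (Fintype.card ι) → Circle) → (ι → Circle) := fun x c => x (E c)
  have hR : Continuous R := continuous_pi fun c => continuous_apply (E c)
  let W : Fin (Fintype.card ι) → Set (Fin (Fintype.card ι) → Circle) := fun l =>
    if h : l.1 < k + 1 then R ⁻¹' (V ⟨l.1, h⟩) else ∅
  have hW : ∀ l, ∃ φ : W l → ℝ, Continuous φ ∧ ∀ x : W l, Circle.exp (φ x) = x.1 l := by
    intro l
    by_cases h : l.1 < k + 1
    · obtain ⟨φ, h1, h2⟩ := hlog ⟨l.1, h⟩ (E.symm l)
      have hW : ∀ x : W l, R x.1 ∈ V ⟨l.1, h⟩ := by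
        intro x
        have := x.2
        simp only [W, dif_pos h] at this
        exact this
      refine ⟨fun x => φ ⟨R x.1, hW x⟩, h1.comp (Continuous.subtype_mk
        (hR.comp continuous_subtype_val) _), ?_⟩
      intro x
      rw [h2]
      simp [R]
    · have : W l = ∅ := by simp only [W, dif_neg h]
      refine ⟨fun _ => 0, continuous_const, ?_⟩
      intro x
      have hx : x.1 ∈ (∅ : Set _) := this ▸ x.2
      exact absurd hx (Set.notMem_empty _)
  choose φ h1 h2 using hW
  refine torus_obstr _ W ?_ ?_ φ h1 h2
  · intro l
    by_cases h : l.1 < k + 1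
    · simp only [W, dif_pos h]; exact (hV _).preimage hR
    · simp only [W, dif_neg h]; exact isOpen_empty
  · intro x
    obtain ⟨l, hl⟩ := hcov (R x)
    refine ⟨⟨l.1, by omega⟩, ?_⟩
    simp only [W, l.2, dif_pos]
    exact hl

/-- identification of `ℂ` with the euclidean plane -/
noncomputable def J : ℂ ≃ₗᵢ[ℝ] EuclideanSpace ℝ (Fin 2) := Complex.orthonormalBasisOneI.repr

section coords
variable {m n r : ℕ}

/-- base points -/
noncomputable def uC (e : Conf 2 (m + n)) (i : Fin m) : ℂ := J.symm (e.1 (Fin.castAdd n i))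
/-- moving points -/
noncomputable def zC (e : Conf 2 (m + n)) (j : Fin n) : ℂ := J.symm (e.1 (Fin.natAdd m j))

lemma continuous_uC (i : Fin m) : Continuous fun e : Conf 2 (m + n) => uC e i :=
  J.symm.continuous.comp ((continuous_apply _).comp continuous_subtype_val)

lemma continuous_zC (j : Fin n) : Continuous fun e : Conf 2 (m + n) => zC e j :=
  J.symm.continuous.comp ((continuous_apply _).comp continuous_subtype_val)

lemma uC_eq_of_proj {e f : Conf 2 (m + n)} (h : fnProj 2 m n e = fnProj 2 m n f) (i : Fin m) :
    uC e i = uC f i := by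
  have := congrFun (congrArg Subtype.val h) i
  exact congrArg J.symm this

lemma proj_eq_of_uC {e f : Conf 2 (m + n)} (h : ∀ i, uC e i = uC f i) :
    fnProj 2 m n e = fnProj 2 m n f := by
  apply Subtype.ext
  funext i
  exact J.symm.injective (h i)

lemma zC_ne_uC (e : Conf 2 (m + n)) (i : Fin m) (j : Fin n) : zC e j ≠ uC e i := by
  intro h
  have := congrArg Fin.val (e.2 (J.symm.injective h))
  simp at this
  omega

lemma uC_inj (e : Conf 2 (m + n)) : Function.Injective (uC e) := by
  intro i j h
  have := congrArg Fin.val (e.2 (J.symm.injective h))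
  exact Fin.ext (by simpa using this)

lemma zC_inj (e : Conf 2 (m + n)) : Function.Injective (zC e) := by
  intro i j h
  have := congrArg Fin.val (e.2 (J.symm.injective h))
  exact Fin.ext (by simpa using this)

lemma conf_ext {e f : Conf 2 (m + n)} (h1 : ∀ i, uC e i = uC f i) (h2 : ∀ i, zC e i = zC f i) :
    e = f := by
  apply Subtype.ext
  funext k
  refine Fin.addCases (fun i => ?_) (fun j => ?_) k
  · exact J.symm.injective (h1 i)
  · exact J.symm.injective (h2 j)

/-- a configuration from complex coordinates -/
noncomputable def mkConf (u : Fin m → ℂ) (z : Fin n → ℂ) (hu : Function.Injective u)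
    (hz : Function.Injective z) (huz : ∀ i j, z j ≠ u i) : Conf 2 (m + n) :=
  ⟨fun k => J (Fin.append u z k), J.injective.comp (Fin.append_injective_iff.2
    ⟨hu, hz, fun i j => (huz i j).symm⟩)⟩

@[simp] lemma uC_mkConf (u : Fin m → ℂ) (z : Fin n → ℂ) (hu hz huz) (i : Fin m) :
    uC (mkConf u z hu hz huz) i = u i := by
  simp [uC, mkConf]

@[simp] lemma zC_mkConf (u : Fin m → ℂ) (z : Fin n → ℂ) (hu hz huz) (j : Fin n) :
    zC (mkConf u z hu hz huz) j = z j := by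
  simp [zC, mkConf]

lemma continuous_mkConf {X : Type} [TopologicalSpace X] (u : X → Fin m → ℂ) (z : X → Fin n → ℂ)
    (hu : ∀ x, Function.Injective (u x)) (hz : ∀ x, Function.Injective (z x))
    (huz : ∀ x i j, z x j ≠ u x i) (cu : ∀ i, Continuous fun x => u x i) (cz : ∀ j, Continuous fun x => z x j) :
    Continuous fun x => mkConf (u x) (z x) (hu x) (hz x) (huz x) := by
  refine Continuous.subtype_mk (continuous_pi fun k => J.continuous.comp ?_) _
  refine Fin.addCases (fun i => ?_) (fun j => ?_) k
  · simpa using cu i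
  · simpa using cz j

lemma schedule_zero (hr : 0 < r) : schedule r ⟨0, hr⟩ = 0 := by
  simp [schedule]

lemma section_log (hr : 0 < r) (U : Set (ParamSpace (fnProj 2 m n) r))
    (s : C(U, FibConstPath (fnProj 2 m n)))
    (hs : ∀ x : U, paramEval (fnProj 2 m n) r (s x) = (x : ParamSpace (fnProj 2 m n) r))
    (a : Fin r) (i : Fin m) (j : Fin n) :
    ∃ Λ : U → ℂ, Continuous Λ ∧ ∀ x : U,
      Complex.exp (Λ x) * (zC (x.1.1 ⟨0, hr⟩) j - uC (x.1.1 ⟨0, hr⟩) i) =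
        zC (x.1.1 a) j - uC (x.1.1 ⟨0, hr⟩) i := by
  have hev : Continuous fun q : unitInterval × U => (s q.2).1 q.1 := by
    have h1 : Continuous fun q : unitInterval × U => ((s q.2).1, q.1) :=
      (continuous_subtype_val.comp (s.continuous.comp continuous_snd)).prodMk continuous_fst
    exact (continuous_eval (F := C(unitInterval, Conf 2 (m + n)))).comp h1
  let F : unitInterval × U → ℂ := fun q => zC ((s q.2).1 q.1) j - uC ((s q.2).1 q.1) i
  have hF : Continuous F := ((continuous_zC j).comp hev).sub ((continuous_uC i).comp hev)
  have hF0 : ∀ q, F q ≠ 0 := fun q => sub_ne_zero.2 (zC_ne_uC _ _ _)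
  let H : C(unitInterval × U, {z : ℂ // z ≠ 0}) :=
    ⟨fun q => ⟨F q / F (0, q.2), div_ne_zero (hF0 _) (hF0 _)⟩,
      Continuous.subtype_mk (hF.div (hF.comp (by fun_prop)) fun q => hF0 _) _⟩
  let Lf := Complex.isCoveringMap_exp.liftHomotopy H (ContinuousMap.const U 0) (by
    intro x
    apply Subtype.ext
    simp [H, hF0])
  have hL : ∀ q, Complex.exp (Lf q) = F q / F (0, q.2) := fun q =>
    congrArg Subtype.val (congrFun (Complex.isCoveringMap_exp.liftHomotopy_lifts H
      (ContinuousMap.const U 0) _) q)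
  refine ⟨fun x => Lf (schedule r a, x), by fun_prop, ?_⟩
  intro x
  have hx : ∀ b, (s x).1 (schedule r b) = x.1.1 b := fun b =>
    congrFun (congrArg Subtype.val (hs x)) b
  have h0 : (s x).1 0 = x.1.1 ⟨0, hr⟩ := by rw [← hx, schedule_zero]
  rw [hL]
  have e1 : F (0, x) = zC (x.1.1 ⟨0, hr⟩) j - uC (x.1.1 ⟨0, hr⟩) i := by
    simp only [F, h0]
  have e2 : F (schedule r a, x) = zC (x.1.1 a) j - uC (x.1.1 ⟨0, hr⟩) i := by
    simp only [F, hx]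
    rw [uC_eq_of_proj (x.1.2 a ⟨0, hr⟩) i]
  rw [e2, ← e1]
  exact div_mul_cancel₀ _ (hF0 _)

end coords

lemma exp_im_of_exp (ψ : ℂ) (t : ℝ) (ht : 0 < t) (x : Circle) (h : Complex.exp ψ = t * x) :
    Circle.exp ψ.im = x := by
  have h1 : ‖Complex.exp ψ‖ = t := by
    rw [h, norm_mul, Circle.norm_coe, mul_one, Complex.norm_real, Real.norm_of_nonneg ht.le]
  rw [Complex.norm_exp] at h1
  apply Circle.ext
  rw [Circle.coe_exp]
  have h2 : Complex.exp ψ = (t : ℂ) * Complex.exp (ψ.im * Complex.I) := by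
    rw [← h1, Complex.ofReal_exp, ← Complex.exp_add, Complex.re_add_im]
  rw [h2] at h
  exact mul_left_cancel₀ (by exact_mod_cast ht.ne') h

lemma slit_aux (D : ℝ) (w : ℂ) (h : ‖w‖ < D) : (D : ℂ) + w ∈ Complex.slitPlane := by
  rw [Complex.mem_slitPlane_iff]
  left
  have := (abs_le.1 (Complex.abs_re_le_norm w)).1
  simp only [Complex.add_re, Complex.ofReal_re]
  linarith

end TCB
namespace TCB
section torus
variable {q n r : ℕ}

/-- torus index type -/
abbrev TI (q n r : ℕ) : Type := (Fin r × Fin n) ⊕ Fin q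

/-- the large distance -/
def DD (q n : ℕ) : ℝ := 3 * (n + q + 2)

/-- base points on the torus -/
noncomputable def tu (x : TI q n r → Circle) : Fin (q + 2) → ℂ :=
  Fin.cons 0 (Fin.cons (DD q n : ℂ) fun k => ((n + 1 + (k : ℕ) : ℝ) : ℂ) * (x (Sum.inr k) : ℂ))

/-- moving points on the torus -/
noncomputable def tz (x : TI q n r → Circle) (a : Fin r) (j : Fin n) : ℂ :=
  (if a.1 = 1 then (DD q n : ℂ) else 0) + (((j : ℕ) + 1 : ℝ) : ℂ) * (x (Sum.inl (a, j)) : ℂ)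

lemma continuous_circle_coe : Continuous fun z : Circle => (z : ℂ) := by fun_prop

lemma norm_rc (t : ℝ) (ht : 0 ≤ t) (x : Circle) : ‖(t : ℂ) * (x : ℂ)‖ = t := by
  rw [norm_mul, Circle.norm_coe, mul_one, Complex.norm_real, Real.norm_of_nonneg ht]

lemma tu_zero (x : TI q n r → Circle) : tu x 0 = 0 := rfl
lemma tu_one (x : TI q n r → Circle) : tu x 1 = (DD q n : ℂ) := rfl
lemma tu_succ (x : TI q n r → Circle) (k : Fin q) :
    tu x k.succ.succ = ((n + 1 + (k : ℕ) : ℝ) : ℂ) * (x (Sum.inr k) : ℂ) := rfl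

lemma fin_cases2 {P : Fin (q + 2) → Prop} (h0 : P 0) (h1 : P 1) (h2 : ∀ k : Fin q, P k.succ.succ) :
    ∀ i, P i := fun i => Fin.cases h0 (fun i => Fin.cases h1 h2 i) i

/-- norms of the base points -/
noncomputable def tun (q n : ℕ) : Fin (q + 2) → ℝ :=
  Fin.cons 0 (Fin.cons (DD q n) fun k => (n + 1 + (k : ℕ) : ℝ))

lemma norm_tu (x : TI q n r → Circle) (i : Fin (q + 2)) : ‖tu x i‖ = tun q n i := by
  revert i
  refine fin_cases2 ?_ ?_ ?_
  · rw [tu_zero, norm_zero]; rfl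
  · rw [tu_one, Complex.norm_real, Real.norm_of_nonneg (by unfold DD; positivity)]; rfl
  · intro k
    rw [tu_succ, norm_rc _ (by positivity)]; rfl

lemma tun_inj : Function.Injective (tun q n) := by
  have hs : ∀ k : Fin q, tun q n k.succ.succ = (n + 1 + (k : ℕ) : ℝ) := fun k => rfl
  have h0 : tun q n 0 = 0 := rfl
  have h1 : tun q n 1 = DD q n := rfl
  have hk : ∀ k : Fin q, (k : ℕ) < (q : ℝ) := fun k => by exact_mod_cast k.2
  have hq : (0 : ℝ) ≤ q := by positivity
  have hn : (0 : ℝ) ≤ n := by positivity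
  unfold DD at h1
  intro i j
  revert i j
  refine fin_cases2 ?_ ?_ ?_ <;> [skip; skip; intro k] <;> refine fin_cases2 ?_ ?_ ?_ <;>
    [skip; skip; intro k'; skip; skip; intro k'; skip; skip; intro k'] <;> intro h <;>
    simp only [h0, h1, hs] at h
  · rfl
  · linarith
  · have : (0 : ℝ) ≤ (k' : ℕ) := by positivity
    linarith
  · linarith
  · rfl
  · have := hk k'; linarith
  · have : (0 : ℝ) ≤ (k : ℕ) := by positivity
    linarith
  · have := hk k; linarith
  · have : (k : ℕ) = k' := by
      have : ((k : ℕ) : ℝ) = (k' : ℕ) := by linarith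
      exact_mod_cast this
    rw [Fin.ext this]

lemma tu_inj (x : TI q n r → Circle) : Function.Injective (tu x) := by
  intro i j h
  apply tun_inj (q := q) (n := n)
  rw [← norm_tu x, ← norm_tu x, h]

lemma tz_inj (x : TI q n r → Circle) (a : Fin r) : Function.Injective (tz x a) := by
  intro j k h
  have h1 := congrArg norm (add_left_cancel h)
  rw [norm_rc _ (by positivity), norm_rc _ (by positivity)] at h1
  have : (j : ℕ) = k := by
    have : ((j : ℕ) : ℝ) = (k : ℕ) := by linarith
    exact_mod_cast this
  exact Fin.ext this

lemma tz_ne_tu (x : TI q n r → Circle) (a : Fin r) (i : Fin (q + 2)) (j : Fin n) :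
    tz x a j ≠ tu x i := by
  have hj : ((j : ℕ) : ℝ) + 1 ≤ n := by exact_mod_cast j.2
  have hq : (0 : ℝ) ≤ q := by positivity
  have hn : (0 : ℝ) ≤ n := by positivity
  have hj0 : (0 : ℝ) ≤ (j : ℕ) := by positivity
  have hc := norm_rc ((j : ℕ) + 1 : ℝ) (by positivity) (x (Sum.inl (a, j)))
  have hk : ∀ k : Fin q, (k : ℕ) < (q : ℝ) := fun k => by exact_mod_cast k.2
  have hD : ‖(DD q n : ℂ)‖ = DD q n := by
    rw [Complex.norm_real, Real.norm_of_nonneg (by unfold DD; positivity)]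
  intro h
  by_cases ha : a.1 = 1
  · simp only [tz, if_pos ha] at h
    have hlow : DD q n - n ≤ ‖tu x i‖ := by
      rw [← h]
      have := norm_sub_norm_le (DD q n : ℂ) (-((((j : ℕ) + 1 : ℝ) : ℂ) * (x (Sum.inl (a, j)) : ℂ)))
      rw [norm_neg, hc, sub_neg_eq_add, hD] at this
      linarith
    rw [norm_tu] at hlow
    revert h hlow
    revert i
    unfold DD
    refine fin_cases2 ?_ ?_ ?_
    · intro h hl
      change _ ≤ (0 : ℝ) at hl
      linarith
    · intro h hl
      rw [tu_one] at h
      unfold DD at h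
      have : (((j : ℕ) + 1 : ℝ) : ℂ) * (x (Sum.inl (a, j)) : ℂ) = 0 := by
        rwa [add_eq_left] at h
      rw [this, norm_zero] at hc
      linarith
    · intro k h hl
      change _ ≤ (n + 1 + (k : ℕ) : ℝ) at hl
      have := hk k
      linarith
  · simp only [tz, if_neg ha, zero_add] at h
    rw [h, norm_tu] at hc
    revert hc
    clear h
    revert i
    refine fin_cases2 ?_ ?_ ?_
    · intro h
      change (0 : ℝ) = _ at h
      linarith
    · intro h
      change DD q n = _ at h
      unfold DD at h
      linarith
    · intro k h
      change (n + 1 + (k : ℕ) : ℝ) = _ at h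
      have : (0 : ℝ) ≤ (k : ℕ) := by positivity
      linarith

lemma continuous_tu (i : Fin (q + 2)) : Continuous fun x : TI q n r → Circle => tu x i := by
  revert i
  refine fin_cases2 ?_ ?_ ?_
  · simp only [tu_zero]; exact continuous_const
  · simp only [tu_one]; exact continuous_const
  · intro k; simp only [tu_succ]; fun_prop

lemma continuous_tz (a : Fin r) (j : Fin n) :
    Continuous fun x : TI q n r → Circle => tz x a j := by
  unfold tz; fun_prop

/-- the torus in the configuration space -/
noncomputable def tg (x : TI q n r → Circle) : ParamSpace (fnProj 2 (q + 2) n) r :=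
  ⟨fun a => mkConf (tu x) (tz x a) (tu_inj x) (tz_inj x a) (tz_ne_tu x a), by
    intro a b
    apply proj_eq_of_uC
    intro i
    simp⟩

lemma continuous_tg : Continuous (tg : (TI q n r → Circle) → _) := by
  refine Continuous.subtype_mk (continuous_pi fun a => ?_) _
  exact continuous_mkConf _ _ _ _ _ continuous_tu (continuous_tz a)

lemma hasLog_of_cexp {ι : Type} {V : Set (ι → Circle)} {c : ι} (ψ : V → ℂ) (hψ : Continuous ψ)
    (t : ℝ) (ht : 0 < t) (h : ∀ x : V, Complex.exp (ψ x) = t * (x.1 c : ℂ)) : HasLog V c :=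
  ⟨fun x => (ψ x).im, Complex.continuous_im.comp hψ, fun x => exp_im_of_exp _ t ht _ (h x)⟩

lemma hasLog_aux (hn : 1 ≤ n) (hr0 : 0 < r) (hr : 2 ≤ r) (V : Set (TI q n r → Circle))
    (key : ∀ (a : Fin r) (i : Fin (q + 2)) (j : Fin n), ∃ Λ : V → ℂ,
      Continuous Λ ∧ ∀ x : V, Complex.exp (Λ x) * (tz x.1 ⟨0, hr0⟩ j - tu x.1 i) =
        tz x.1 a j - tu x.1 i) (c : TI q n r) : HasLog V c := by
  have hcc' : ∀ c, Continuous fun x : V => x.1 c :=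
    fun c => (continuous_apply c).comp continuous_subtype_val
  have hcc : ∀ c, Continuous fun x : V => (x.1 c : ℂ) :=
    fun c => continuous_circle_coe.comp (hcc' c)
  let a0 : Fin r := ⟨0, hr0⟩
  let a1 : Fin r := ⟨1, by omega⟩
  have hq : (0 : ℝ) ≤ q := by positivity
  have hn' : (1 : ℝ) ≤ n := by exact_mod_cast hn
  have tz0 : ∀ (x : TI q n r → Circle) (j : Fin n),
      tz x a0 j = (((j : ℕ) + 1 : ℝ) : ℂ) * (x (Sum.inl (a0, j)) : ℂ) := by
    intro x j; simp [tz, a0]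
  have tz1 : ∀ (x : TI q n r → Circle) (j : Fin n),
      tz x a1 j = DD q n + (((j : ℕ) + 1 : ℝ) : ℂ) * (x (Sum.inl (a1, j)) : ℂ) := by
    intro x j; simp [tz, a1]
  have hρ : ∀ j : Fin n, (0 : ℝ) < (j : ℕ) + 1 := fun j => by positivity
  have hj : ∀ j : Fin n, ((j : ℕ) : ℝ) + 1 ≤ n := fun j => by exact_mod_cast j.2
  have hslit1 : ∀ (x : TI q n r → Circle) (j : Fin n),
      (DD q n : ℂ) + (((j : ℕ) + 1 : ℝ) : ℂ) * (x (Sum.inl (a1, j)) : ℂ) ∈ Complex.slitPlane := by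
    intro x j
    refine slit_aux _ _ ?_
    rw [norm_rc _ (hρ j).le]
    have := hj j
    unfold DD; linarith
  -- coordinates of group 0
  have case0 : ∀ j : Fin n, ∃ ψ : V → ℂ, Continuous ψ ∧ ∀ x : V,
      Complex.exp (ψ x) = (((j : ℕ) + 1 : ℝ) : ℂ) * (x.1 (Sum.inl (a0, j)) : ℂ) := by
    intro j
    obtain ⟨Λ, h1, h2⟩ := key a1 0 j
    refine ⟨fun x => Complex.log ((DD q n : ℂ) + (((j : ℕ) + 1 : ℝ) : ℂ) *
      (x.1 (Sum.inl (a1, j)) : ℂ)) - Λ x, ?_, ?_⟩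
    · refine Continuous.sub ?_ h1
      refine Continuous.clog ?_ fun x => hslit1 x.1 j
      exact continuous_const.add (continuous_const.mul (hcc _))
    · intro x
      have := h2 x
      rw [tz0, tz1, tu_zero, sub_zero, sub_zero] at this
      rw [Complex.exp_sub, Complex.exp_log (Complex.slitPlane_ne_zero (hslit1 x.1 j)), ← this]
      exact mul_div_cancel_left₀ _ (Complex.exp_ne_zero _)
  rcases c with ⟨a, j⟩ | k
  · by_cases ha0 : a = a0
    · subst ha0
      obtain ⟨ψ, h1, h2⟩ := case0 j
      exact hasLog_of_cexp ψ h1 _ (hρ j) h2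
    by_cases ha1 : a = a1
    · subst ha1
      obtain ⟨Λ, h1, h2⟩ := key a1 1 j
      have hsl : ∀ x : TI q n r → Circle, (DD q n : ℂ) + -((((j : ℕ) + 1 : ℝ) : ℂ) *
          (x (Sum.inl (a0, j)) : ℂ)) ∈ Complex.slitPlane := by
        intro x
        refine slit_aux _ _ ?_
        rw [norm_neg, norm_rc _ (hρ j).le]
        have := hj j
        unfold DD; linarith
      refine hasLog_of_cexp (fun x => Λ x + Complex.log ((DD q n : ℂ) +
        -((((j : ℕ) + 1 : ℝ) : ℂ) * (x.1 (Sum.inl (a0, j)) : ℂ))) + Real.pi * Complex.I) ?_ _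
        (hρ j) ?_
      · refine Continuous.add (Continuous.add h1 ?_) continuous_const
        refine Continuous.clog ?_ fun x => hsl x.1
        exact continuous_const.add (continuous_const.mul (hcc _)).neg
      · intro x
        have := h2 x
        rw [tz0, tz1, tu_one, add_sub_cancel_left] at this
        rw [Complex.exp_add, Complex.exp_add, Complex.exp_pi_mul_I,
          Complex.exp_log (Complex.slitPlane_ne_zero (hsl x.1)), ← this]
        ring
    · obtain ⟨Λ, h1, h2⟩ := key a 0 j
      obtain ⟨ψ, h3, h4⟩ := case0 j
      refine hasLog_of_cexp (fun x => Λ x + ψ x) (h1.add h3) _ (hρ j) ?_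
      intro x
      have := h2 x
      have ha : ¬ a.1 = 1 := fun h => ha1 (Fin.ext h)
      rw [tz0, tu_zero, sub_zero, sub_zero, tz, if_neg ha, zero_add] at this
      rw [Complex.exp_add, h4, this]
  · let j0 : Fin n := ⟨0, hn⟩
    obtain ⟨Λ, h1, h2⟩ := key a1 k.succ.succ j0
    have hk : ((k : ℕ) : ℝ) < q := by exact_mod_cast k.2
    have hk0 : (0 : ℝ) ≤ (k : ℕ) := by positivity
    have hR : (0 : ℝ) ≤ n + 1 + (k : ℕ) := by positivity
    have hsl1 : ∀ x : TI q n r → Circle, (DD q n : ℂ) + ((((j0 : ℕ) + 1 : ℝ) : ℂ) *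
          (x (Sum.inl (a1, j0)) : ℂ) - ((n + 1 + (k : ℕ) : ℝ) : ℂ) * (x (Sum.inr k) : ℂ))
          ∈ Complex.slitPlane := by
      intro x
      refine slit_aux _ _ (lt_of_le_of_lt (norm_sub_le _ _) ?_)
      rw [norm_rc _ (hρ j0).le, norm_rc _ hR]
      have := hj j0
      unfold DD; linarith
    have hsl2 : ∀ x : TI q n r → Circle, ((n + 1 + (k : ℕ) : ℝ) : ℂ) + -((((j0 : ℕ) + 1 : ℝ) : ℂ) *
          ((x (Sum.inl (a0, j0)) / x (Sum.inr k) : Circle) : ℂ)) ∈ Complex.slitPlane := by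
      intro x
      refine slit_aux _ _ ?_
      rw [norm_neg, norm_rc _ (hρ j0).le]
      have := hj j0
      linarith
    refine hasLog_of_cexp (fun x => Complex.log ((DD q n : ℂ) + ((((j0 : ℕ) + 1 : ℝ) : ℂ) *
          (x.1 (Sum.inl (a1, j0)) : ℂ) - ((n + 1 + (k : ℕ) : ℝ) : ℂ) * (x.1 (Sum.inr k) : ℂ)))
          - Λ x - Complex.log (((n + 1 + (k : ℕ) : ℝ) : ℂ) + -((((j0 : ℕ) + 1 : ℝ) : ℂ) *
          ((x.1 (Sum.inl (a0, j0)) / x.1 (Sum.inr k) : Circle) : ℂ))) + Real.pi * Complex.I)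
          ?_ 1 one_pos ?_
    · refine Continuous.add (Continuous.sub (Continuous.sub ?_ h1) ?_) continuous_const
      · refine Continuous.clog ?_ fun x => hsl1 x.1
        exact continuous_const.add ((continuous_const.mul (hcc _)).sub
          (continuous_const.mul (hcc _)))
      refine Continuous.clog ?_ fun x => hsl2 x.1
      have : Continuous fun x : V =>
          (x.1 (Sum.inl (a0, j0)) / x.1 (Sum.inr k) : Circle) := (hcc' _).div' (hcc' _)
      exact continuous_const.add (continuous_const.mul (continuous_circle_coe.comp this)).neg
    · intro x
      have := h2 x
      rw [tz0, tz1, tu_succ, add_sub_assoc] at this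
      have n2 := Complex.slitPlane_ne_zero (hsl2 x.1)
      have n1 := Complex.slitPlane_ne_zero (hsl1 x.1)
      have ne : Complex.exp (Λ x) ≠ 0 := Complex.exp_ne_zero _
      have nx : (x.1 (Sum.inr k) : ℂ) ≠ 0 := Circle.coe_ne_zero _
      rw [Complex.exp_add, Complex.exp_sub, Complex.exp_sub, Complex.exp_pi_mul_I,
        Complex.exp_log n1, Complex.exp_log n2, ← this, mul_div_cancel_left₀ _ ne]
      rw [div_mul_eq_mul_div, div_eq_iff n2]
      rw [Circle.coe_div]
      field_simp
      push_cast
      ring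

lemma hasLog_tg (hn : 1 ≤ n) (hr : 2 ≤ r) (U : Set (ParamSpace (fnProj 2 (q + 2) n) r))
    (s : C(U, FibConstPath (fnProj 2 (q + 2) n)))
    (hs : ∀ x : U, paramEval (fnProj 2 (q + 2) n) r (s x) =
      (x : ParamSpace (fnProj 2 (q + 2) n) r)) (c : TI q n r) : HasLog (tg ⁻¹' U) c := by
  have hr0 : 0 < r := by omega
  refine hasLog_aux hn hr0 hr _ ?_ c
  intro a i j
  obtain ⟨Λ, h1, h2⟩ := section_log hr0 U s hs a i j
  refine ⟨fun x => Λ ⟨tg x.1, x.2⟩, h1.comp (Continuous.subtype_mk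
    (continuous_tg.comp continuous_subtype_val) _), ?_⟩
  intro x
  have := h2 ⟨tg x.1, x.2⟩
  simpa [tg] using this

lemma lower_bound (hn : 1 ≤ n) (hr : 2 ≤ r) (k : ℕ)
    (h : HasSecatLE (paramEval (fnProj 2 (q + 2) n) r) k) : r * n + q ≤ k := by
  by_contra hk
  obtain ⟨U, hU, hcov, hsec⟩ := h
  refine torus_obstr' (ι := TI q n r) k (by simp; omega) (fun l => tg ⁻¹' U l)
    (fun l => (hU l).preimage continuous_tg) ?_ ?_
  · intro x
    have : tg x ∈ ⋃ i, U i := by rw [hcov]; trivial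
    obtain ⟨l, hl⟩ := Set.mem_iUnion.1 this
    exact ⟨l, hl⟩
  · intro l c
    obtain ⟨s, hs⟩ := hsec l
    exact hasLog_tg hn hr (U l) s hs c
end torus
end TCB
namespace TCB
section comb
variable {P : Type} [Fintype P]
open Classical in
/-- minimal gap between points in different classes -/
noncomputable def gap (S : Setoid P) (ξ : P → ℝ) : ℝ :=
  if h : (Finset.univ.filter (fun pq : P × P => ¬ S.r pq.1 pq.2)).Nonempty then
    Finset.inf' _ h (fun pq => |ξ pq.1 - ξ pq.2|) else 1

open Classical in
/-- maximum over a class -/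
noncomputable def top (S : Setoid P) (p : P) (ξ : P → ℝ) : ℝ :=
  Finset.sup' (Finset.univ.filter (fun q => S.r p q)) ⟨p, by simp [S.refl p]⟩ ξ

/-- the real parts are grouped according to `S` -/
def Good (S : Setoid P) (ξ : P → ℝ) : Prop :=
  ∀ p q p' q', S.r p q → ¬ S.r p' q' → |ξ p - ξ q| < |ξ p' - ξ q'|

lemma continuous_gap {Y : Type} [TopologicalSpace Y] (S : Setoid P) (ξ : Y → P → ℝ)
    (h : ∀ p, Continuous fun y => ξ y p) : Continuous fun y => gap S (ξ y) := by
  unfold gap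
  split_ifs with hh
  · exact Continuous.finset_inf'_apply hh fun i _ => ((h _).sub (h _)).abs
  · exact continuous_const

lemma continuous_top {Y : Type} [TopologicalSpace Y] (S : Setoid P) (p : P) (ξ : Y → P → ℝ)
    (h : ∀ p, Continuous fun y => ξ y p) : Continuous fun y => top S p (ξ y) := by
  unfold top
  exact Continuous.finset_sup'_apply _ fun i _ => h i

lemma gap_pos {S : Setoid P} {ξ : P → ℝ} (h : Good S ξ) : 0 < gap S ξ := by
  unfold gap
  split_ifs with hh
  · rw [Finset.lt_inf'_iff]
    intro pq hpq
    have := h pq.1 pq.1 pq.1 pq.2 (S.refl _) (by simpa using hpq)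
    simpa using this
  · exact one_pos

lemma gap_le {S : Setoid P} {ξ : P → ℝ} {p q : P} (h : ¬ S.r p q) : gap S ξ ≤ |ξ p - ξ q| := by
  classical
  have hm : (p, q) ∈ (Finset.univ.filter (fun pq : P × P => ¬ S.r pq.1 pq.2)) := by simpa using h
  unfold gap
  rw [dif_pos ⟨_, hm⟩]
  exact Finset.inf'_le (fun pq : P × P => |ξ pq.1 - ξ pq.2|) hm

lemma le_top {S : Setoid P} {ξ : P → ℝ} {p q : P} (h : S.r p q) : ξ q ≤ top S p ξ := by
  classical
  exact Finset.le_sup' ξ (by simpa using h)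

lemma exists_top (S : Setoid P) (ξ : P → ℝ) (p : P) : ∃ q, S.r p q ∧ top S p ξ = ξ q := by
  classical
  obtain ⟨q, hq, h⟩ := Finset.exists_mem_eq_sup' (s := Finset.univ.filter (fun q => S.r p q))
    ⟨p, by simp [S.refl p]⟩ ξ
  exact ⟨q, by simpa using hq, h⟩

lemma top_le_top {S : Setoid P} {ξ : P → ℝ} {p q : P} (h : S.r p q) : top S q ξ ≤ top S p ξ := by
  obtain ⟨q', h1, h2⟩ := exists_top S ξ q
  rw [h2]
  exact le_top (S.trans h h1)

lemma top_eq {S : Setoid P} {ξ : P → ℝ} {p q : P} (h : S.r p q) : top S p ξ = top S q ξ :=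
  le_antisymm (top_le_top (S.symm h)) (top_le_top h)

lemma sep_aux {S : Setoid P} {ξ : P → ℝ} (hg : Good S ξ) {p q : P} (h : ¬ S.r p q)
    (hlt : top S p ξ ≤ top S q ξ) : top S p ξ + gap S ξ ≤ ξ q := by
  obtain ⟨p1, h1, e1⟩ := exists_top S ξ p
  obtain ⟨q1, h2, e2⟩ := exists_top S ξ q
  have hn : ¬ S.r p1 q1 := fun hh => h (S.trans h1 (S.trans hh (S.symm h2)))
  have hn' : ¬ S.r p1 q := fun hh => h (S.trans h1 hh)
  have a1 := gap_le (ξ := ξ) hn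
  have a2 := gap_le (ξ := ξ) hn'
  have a3 := hg q1 q p1 q1 (S.symm h2) hn
  have gp := gap_pos hg
  rw [e1, e2] at hlt
  rw [e1]
  have hlt' : ξ p1 < ξ q1 := by
    rcases hlt.lt_or_eq with h | h
    · exact h
    · rw [h, sub_self, abs_zero] at a1; linarith
  rw [abs_of_neg (by linarith : ξ p1 - ξ q1 < 0)] at a3
  have a4 := le_abs_self (ξ q1 - ξ q)
  rw [abs_of_neg (by linarith : ξ p1 - ξ q < 0)] at a2
  linarith

lemma sep {S : Setoid P} {ξ : P → ℝ} (hg : Good S ξ) {p q : P} (h : ¬ S.r p q) {A B : ℝ}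
    (hA : ξ p ≤ A) (hA' : A < top S p ξ + gap S ξ) (hB : ξ q ≤ B)
    (hB' : B < top S q ξ + gap S ξ) : A ≠ B := by
  rcases le_total (top S p ξ) (top S q ξ) with hh | hh
  · have := sep_aux hg h hh
    intro e; linarith
  · have := sep_aux hg (fun h' => h (S.symm h')) hh
    intro e; linarith

lemma good_ker (ξ : P → ℝ) : Good (Setoid.ker ξ) ξ := by
  intro p q p' q' h h'
  have h1 : ξ p = ξ q := h
  have h2 : ξ p' ≠ ξ q' := h'
  rw [h1, sub_self, abs_zero]
  exact abs_pos.2 (sub_ne_zero.2 h2)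

lemma setoid_eq_of_le {S S' : Setoid P} (h : ∀ p q, S.r p q → S'.r p q)
    (hc : Nat.card (Quotient S) = Nat.card (Quotient S')) : S = S' := by
  classical
  let f : Quotient S → Quotient S' := Quotient.map' id (fun a b hab => h a b hab)
  have hf : Function.Surjective f := by
    intro y
    induction y using Quotient.inductionOn with
    | _ y => exact ⟨Quotient.mk S y, rfl⟩
  have hb : Function.Bijective f := by
    haveI := Fintype.ofFinite (Quotient S)
    haveI := Fintype.ofFinite (Quotient S')
    rw [Fintype.bijective_iff_surjective_and_card]
    exact ⟨hf, by simpa [Nat.card_eq_fintype_card] using hc⟩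
  apply Setoid.ext
  intro a b
  refine ⟨h a b, fun hab => ?_⟩
  have : f (Quotient.mk S a) = f (Quotient.mk S b) := Quotient.sound hab
  exact Quotient.exact (hb.1 this)

lemma good_unique {S S' : Setoid P} {ξ : P → ℝ} (h : Good S ξ) (h' : Good S' ξ)
    (hc : Nat.card (Quotient S) = Nat.card (Quotient S')) : S = S' := by
  by_cases h1 : ∀ p q, S.r p q → S'.r p q
  · exact setoid_eq_of_le h1 hc
  by_cases h2 : ∀ p q, S'.r p q → S.r p q
  · exact (setoid_eq_of_le h2 hc.symm).symm
  push Not at h1 h2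
  obtain ⟨p, q, a, b⟩ := h1
  obtain ⟨p', q', a', b'⟩ := h2
  exact absurd (h _ _ _ _ a b') (h' _ _ _ _ a' b).not_gt

end comb

section stages

/-- clamp -/
noncomputable def cl (t : ℝ) : ℝ := max 0 (min 1 t)

lemma continuous_cl : Continuous cl := by unfold cl; fun_prop
lemma cl_nonneg (t : ℝ) : 0 ≤ cl t := le_max_left _ _
lemma cl_le_one (t : ℝ) : cl t ≤ 1 := max_le zero_le_one (min_le_left _ _)
lemma cl_of_nonpos {t : ℝ} (h : t ≤ 0) : cl t = 0 := max_eq_left ((min_le_right _ _).trans h)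
lemma cl_of_one_le {t : ℝ} (h : 1 ≤ t) : cl t = 1 := by
  unfold cl; rw [min_eq_left h]; exact max_eq_right zero_le_one

/-- three stage path -/
noncomputable def gm (ξ η X T s : ℝ) : ℂ :=
  ⟨(1 - cl (3 * s - 2)) * (ξ + cl (3 * s) * (X - ξ)), η + cl (3 * s - 1) * (T - η)⟩

lemma gm_zero (ξ η X T : ℝ) : gm ξ η X T 0 = ⟨ξ, η⟩ := by
  unfold gm
  rw [cl_of_nonpos (by norm_num), cl_of_nonpos (by norm_num), cl_of_nonpos (by norm_num)]
  simp

lemma gm_one (ξ η X T : ℝ) : gm ξ η X T 1 = ⟨0, T⟩ := by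
  unfold gm
  rw [cl_of_one_le (by norm_num), cl_of_one_le (by norm_num), cl_of_one_le (by norm_num)]
  simp

lemma gm_ne_gm {ξ η X T ξ' η' X' T' : ℝ}
    (h1 : ∀ t, 0 ≤ t → t ≤ 1 → ξ + t * (X - ξ) = ξ' + t * (X' - ξ') → η ≠ η')
    (h2 : X ≠ X') (h3 : T ≠ T') (s : ℝ) : gm ξ η X T s ≠ gm ξ' η' X' T' s := by
  intro h
  have hre := congrArg Complex.re h
  have him := congrArg Complex.im h
  simp only [gm] at hre him
  rcases le_total (3 * s) 1 with a | a
  · rw [cl_of_nonpos (t := 3 * s - 2) (by linarith)] at hre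
    rw [cl_of_nonpos (t := 3 * s - 1) (by linarith)] at him
    exact h1 _ (cl_nonneg _) (cl_le_one _) (by linarith) (by linarith)
  rcases le_total (3 * s) 2 with b | b
  · rw [cl_of_nonpos (t := 3 * s - 2) (by linarith), cl_of_one_le a] at hre
    exact h2 (by linarith)
  · rw [cl_of_one_le (t := 3 * s - 1) (by linarith)] at him
    exact h3 (by linarith)

lemma gm_ne {ξ η X T a b : ℝ}
    (h1 : ∀ t, 0 ≤ t → t ≤ 1 → ξ + t * (X - ξ) = a → η ≠ b)
    (h2 : X ≠ a) (h3 : T ≠ b) (s : ℝ) : gm ξ η X T s ≠ ⟨a, b⟩ := by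
  intro h
  have hre := congrArg Complex.re h
  have him := congrArg Complex.im h
  simp only [gm] at hre him
  rcases le_total (3 * s) 1 with a | a
  · rw [cl_of_nonpos (t := 3 * s - 2) (by linarith)] at hre
    rw [cl_of_nonpos (t := 3 * s - 1) (by linarith)] at him
    exact h1 _ (cl_nonneg _) (cl_le_one _) (by linarith) (by linarith)
  rcases le_total (3 * s) 2 with b | b
  · rw [cl_of_nonpos (t := 3 * s - 2) (by linarith), cl_of_one_le a] at hre
    exact h2 (by linarith)
  · rw [cl_of_one_le (t := 3 * s - 1) (by linarith)] at him
    exact h3 (by linarith)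

lemma continuous_gm {Y : Type} [TopologicalSpace Y] {ξ η X T s : Y → ℝ} (h1 : Continuous ξ)
    (h2 : Continuous η) (h3 : Continuous X) (h4 : Continuous T) (h5 : Continuous s) :
    Continuous fun y => gm (ξ y) (η y) (X y) (T y) (s y) := by
  have e : (fun y => gm (ξ y) (η y) (X y) (T y) (s y)) = fun y =>
      Complex.equivRealProdCLM.symm ((1 - cl (3 * s y - 2)) * (ξ y + cl (3 * s y) * (X y - ξ y)),
        η y + cl (3 * s y - 1) * (T y - η y)) := by
    funext y
    apply Complex.ext <;> simp [gm]
  rw [e]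
  refine Complex.equivRealProdCLM.symm.continuous.comp ?_
  have c1 := continuous_cl.comp ((continuous_const (y := (3:ℝ))).mul h5)
  have c2 := continuous_cl.comp (((continuous_const (y := (3:ℝ))).mul h5).sub
    (continuous_const (y := (1:ℝ))))
  have c3 := continuous_cl.comp (((continuous_const (y := (3:ℝ))).mul h5).sub
    (continuous_const (y := (2:ℝ))))
  exact ((continuous_const.sub c3).mul (h1.add (c1.mul (h3.sub h1)))).prodMk
    (h2.add (c2.mul (h4.sub h2)))

/-- concatenation parameter -/
noncomputable def rho (τ : ℝ) (a : ℕ) : ℝ := min 1 (2 * |τ - a|)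

/-- concatenated loop of paths -/
noncomputable def Gam {r n : ℕ} (γ : Fin r → Fin n → ℝ → ℂ) (c : Fin n → ℂ) (τ : ℝ) (j : Fin n) : ℂ :=
  c j + ∑ a : Fin r, (γ a j (rho τ a) - c j)

lemma rho_one {τ : ℝ} {a b : ℕ} (h : a ≠ b) (ha : 2 * |τ - a| < 1) : rho τ b = 1 := by
  unfold rho
  apply min_eq_left
  have h1 : (1 : ℝ) ≤ |(a : ℝ) - b| := by
    have : (1 : ℤ) ≤ |(a : ℤ) - b| := Int.one_le_abs (by omega)
    exact_mod_cast this
  have h2 : |(a : ℝ) - b| ≤ |τ - a| + |τ - b| := by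
    have := abs_sub_le (a : ℝ) τ b
    rwa [abs_sub_comm (a : ℝ) τ] at this
  linarith

lemma Gam_near {r n : ℕ} (γ : Fin r → Fin n → ℝ → ℂ) (c : Fin n → ℂ) (hγ : ∀ a j, γ a j 1 = c j)
    (τ : ℝ) (a : Fin r) (ha : 2 * |τ - (a : ℕ)| < 1) (j : Fin n) :
    Gam γ c τ j = γ a j (rho τ a) := by
  unfold Gam
  rw [Finset.sum_eq_single a]
  · ring
  · intro b _ hb
    rw [rho_one (fun h => hb (Fin.ext h.symm)) ha, hγ, sub_self]
  · simp

lemma Gam_exists {r n : ℕ} (hr : 0 < r) (γ : Fin r → Fin n → ℝ → ℂ) (c : Fin n → ℂ)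
    (hγ : ∀ a j, γ a j 1 = c j) (τ : ℝ) : ∃ a s, ∀ j, Gam γ c τ j = γ a j s := by
  by_cases h : ∃ a : Fin r, 2 * |τ - (a : ℕ)| < 1
  · obtain ⟨a, ha⟩ := h
    exact ⟨a, _, Gam_near γ c hγ τ a ha⟩
  · push Not at h
    refine ⟨⟨0, hr⟩, 1, fun j => ?_⟩
    unfold Gam
    rw [Finset.sum_eq_zero, hγ, add_zero]
    intro b _
    rw [rho, min_eq_left (h b), hγ, sub_self]

lemma Gam_at {r n : ℕ} (γ : Fin r → Fin n → ℝ → ℂ) (c : Fin n → ℂ) (hγ : ∀ a j, γ a j 1 = c j)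
    (a : Fin r) (j : Fin n) : Gam γ c (a : ℕ) j = γ a j 0 := by
  rw [Gam_near γ c hγ _ a (by simp)]
  simp [rho]

end stages
end TCB
namespace TCB
section plan
variable {q n r : ℕ}

/-- index of all points -/
abbrev PI' (q n r : ℕ) : Type := Fin (q + 2) ⊕ (Fin r × Fin n)

/-- scale -/
noncomputable def scl (hr : 0 < r) (e : ParamSpace (fnProj 2 (q + 2) n) r) : ℂ :=
  uC (e.1 ⟨0, hr⟩) 1 - uC (e.1 ⟨0, hr⟩) 0

/-- raw points -/
noncomputable def raw (hr : 0 < r) (e : ParamSpace (fnProj 2 (q + 2) n) r) : PI' q n r → ℂ :=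
  Sum.elim (fun i => uC (e.1 ⟨0, hr⟩) i) (fun aj => zC (e.1 aj.1) aj.2)

/-- normalized points -/
noncomputable def nrm (hr : 0 < r) (e : ParamSpace (fnProj 2 (q + 2) n) r) (p : PI' q n r) : ℂ :=
  (raw hr e p - uC (e.1 ⟨0, hr⟩) 0) / scl hr e

lemma scl_ne (hr : 0 < r) (e : ParamSpace (fnProj 2 (q + 2) n) r) : scl hr e ≠ 0 := by
  refine sub_ne_zero.2 fun h => ?_
  have := uC_inj _ h
  simp at this

lemma raw_eq (hr : 0 < r) (e : ParamSpace (fnProj 2 (q + 2) n) r) (p : PI' q n r) :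
    uC (e.1 ⟨0, hr⟩) 0 + scl hr e * nrm hr e p = raw hr e p := by
  unfold nrm
  rw [mul_div_cancel₀ _ (scl_ne hr e)]
  ring

lemma cont_e (a : Fin r) : Continuous fun e : ParamSpace (fnProj 2 (q + 2) n) r => e.1 a :=
  (continuous_apply a).comp continuous_subtype_val

lemma continuous_scl (hr : 0 < r) : Continuous (scl (q := q) (n := n) hr) :=
  ((continuous_uC _).comp (cont_e _)).sub ((continuous_uC _).comp (cont_e _))

lemma continuous_raw (hr : 0 < r) (p : PI' q n r) : Continuous fun e => raw hr e p := by
  rcases p with i | ⟨a, j⟩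
  · exact (continuous_uC i).comp (cont_e _)
  · exact (continuous_zC j).comp (cont_e a)

lemma continuous_nrm (hr : 0 < r) (p : PI' q n r) : Continuous fun e => nrm hr e p :=
  ((continuous_raw hr p).sub ((continuous_uC _).comp (cont_e _))).div (continuous_scl hr)
    (scl_ne hr)

lemma nrm_inj (hr : 0 < r) (e : ParamSpace (fnProj 2 (q + 2) n) r) {p p' : PI' q n r}
    (h : nrm hr e p = nrm hr e p') : raw hr e p = raw hr e p' := by
  rw [← raw_eq, h, raw_eq]

lemma nrm_u_ne (hr : 0 < r) (e : ParamSpace (fnProj 2 (q + 2) n) r) (i a j) :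
    nrm hr e (Sum.inr (a, j)) ≠ nrm hr e (Sum.inl i) := by
  intro h
  have h1 : zC (e.1 a) j = uC (e.1 ⟨0, hr⟩) i := nrm_inj hr e h
  rw [uC_eq_of_proj (e.2 ⟨0, hr⟩ a)] at h1
  exact zC_ne_uC _ _ _ h1

lemma nrm_z_ne (hr : 0 < r) (e : ParamSpace (fnProj 2 (q + 2) n) r) (a) {j k} (hjk : j ≠ k) :
    nrm hr e (Sum.inr (a, j)) ≠ nrm hr e (Sum.inr (a, k)) := by
  intro h
  exact hjk (zC_inj (e.1 a) (nrm_inj hr e h))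

/-- top height -/
noncomputable def hgt (hr : 0 < r) (e : ParamSpace (fnProj 2 (q + 2) n) r) (j : Fin n) : ℝ :=
  1 + (∑ p, |(nrm hr e p).im|) + (j : ℕ)

lemma continuous_hgt (hr : 0 < r) (j : Fin n) : Continuous fun e => hgt (q := q) hr e j := by
  unfold hgt
  refine (continuous_const.add ?_).add continuous_const
  exact continuous_finsetSum _ fun p _ => (Complex.continuous_im.comp (continuous_nrm hr p)).abs

lemma hgt_ne (hr : 0 < r) (e : ParamSpace (fnProj 2 (q + 2) n) r) (j : Fin n) (p) :
    hgt hr e j ≠ (nrm hr e p).im := by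
  have h1 : |(nrm hr e p).im| ≤ ∑ p, |(nrm hr e p).im| :=
    Finset.single_le_sum (f := fun p => |(nrm hr e p).im|) (fun _ _ => abs_nonneg _)
      (Finset.mem_univ p)
  have h2 := le_abs_self (nrm hr e p).im
  have h3 : (0 : ℝ) ≤ (j : ℕ) := by positivity
  unfold hgt
  intro h
  linarith

lemma hgt_inj (hr : 0 < r) (e : ParamSpace (fnProj 2 (q + 2) n) r) {j k : Fin n} (h : j ≠ k) :
    hgt hr e j ≠ hgt hr e k := by
  unfold hgt
  intro h'
  have : ((j : ℕ) : ℝ) = (k : ℕ) := by linarith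
  exact h (Fin.ext (by exact_mod_cast this))

lemma schedule_mul (hr : 2 ≤ r) (a : Fin r) : (schedule r a : ℝ) * ((r : ℝ) - 1) = (a : ℕ) := by
  have h2 : (2 : ℝ) ≤ r := by exact_mod_cast hr
  have h1 : (0 : ℝ) < (r : ℝ) - 1 := by linarith
  have ha : ((a : ℕ) : ℝ) + 1 ≤ r := by exact_mod_cast a.2
  have hm : ((a : ℕ) : ℝ) / ((r : ℝ) - 1) ∈ Set.Icc (0 : ℝ) 1 :=
    ⟨by positivity, by rw [div_le_one h1]; linarith⟩
  unfold schedule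
  rw [Set.projIcc_of_mem _ hm]
  exact div_mul_cancel₀ _ h1.ne'

lemma planner (hr : 2 ≤ r) (hr0 : 0 < r) (U : Set (ParamSpace (fnProj 2 (q + 2) n) r))
    (X : U → Fin r → Fin n → ℝ) (hX : ∀ a j, Continuous fun e => X e a j)
    (h1 : ∀ (e : U) a j k, j ≠ k → ∀ t, 0 ≤ t → t ≤ 1 →
      (nrm hr0 e.1 (Sum.inr (a, j))).re + t * (X e a j - (nrm hr0 e.1 (Sum.inr (a, j))).re) =
      (nrm hr0 e.1 (Sum.inr (a, k))).re + t * (X e a k - (nrm hr0 e.1 (Sum.inr (a, k))).re) →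
      (nrm hr0 e.1 (Sum.inr (a, j))).im ≠ (nrm hr0 e.1 (Sum.inr (a, k))).im)
    (h1' : ∀ (e : U) a j i, ∀ t, 0 ≤ t → t ≤ 1 →
      (nrm hr0 e.1 (Sum.inr (a, j))).re + t * (X e a j - (nrm hr0 e.1 (Sum.inr (a, j))).re) =
      (nrm hr0 e.1 (Sum.inl i)).re →
      (nrm hr0 e.1 (Sum.inr (a, j))).im ≠ (nrm hr0 e.1 (Sum.inl i)).im)
    (h2 : ∀ e a j k, j ≠ k → X e a j ≠ X e a k)
    (h2' : ∀ e a j i, X e a j ≠ (nrm hr0 e.1 (Sum.inl i)).re) :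
    ∃ s : C(U, FibConstPath (fnProj 2 (q + 2) n)), ∀ x : U,
      paramEval (fnProj 2 (q + 2) n) r (s x) = (x : ParamSpace (fnProj 2 (q + 2) n) r) := by
  let γ : U → Fin r → Fin n → ℝ → ℂ := fun e a j s =>
    gm (nrm hr0 e.1 (Sum.inr (a, j))).re (nrm hr0 e.1 (Sum.inr (a, j))).im (X e a j)
      (hgt hr0 e.1 j) s
  let c : U → Fin n → ℂ := fun e j => ⟨0, hgt hr0 e.1 j⟩
  have hγ : ∀ e a j, γ e a j 1 = c e j := fun e a j => gm_one _ _ _ _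
  have hγ0 : ∀ e a j, γ e a j 0 = nrm hr0 e.1 (Sum.inr (a, j)) := fun e a j => gm_zero _ _ _ _
  let Z : U × unitInterval → Fin n → ℂ := fun y j => uC (y.1.1.1 ⟨0, hr0⟩) 0 +
    scl hr0 y.1.1 * Gam (γ y.1) (c y.1) ((y.2 : ℝ) * ((r : ℝ) - 1)) j
  let W : U × unitInterval → Fin (q + 2) → ℂ := fun y i => uC (y.1.1.1 ⟨0, hr0⟩) i
  have hW : ∀ y, Function.Injective (W y) := fun y => uC_inj _
  have hZ : ∀ y, Function.Injective (Z y) := by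
    intro y j k hjk
    have hjk := mul_left_cancel₀ (scl_ne hr0 _) (add_left_cancel hjk)
    obtain ⟨a, s, hs⟩ := Gam_exists hr0 (γ y.1) (c y.1) (hγ y.1) ((y.2 : ℝ) * ((r : ℝ) - 1))
    rw [hs, hs] at hjk
    by_contra hne
    exact gm_ne_gm (h1 y.1 a j k hne) (h2 _ _ _ _ hne) (hgt_inj hr0 _ hne) s hjk
  have hZW : ∀ y i j, Z y j ≠ W y i := by
    intro y i j hij
    have hij : Z y j = raw hr0 y.1.1 (Sum.inl i) := hij
    rw [← raw_eq] at hij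
    have hij := mul_left_cancel₀ (scl_ne hr0 _) (add_left_cancel hij)
    obtain ⟨a, s, hs⟩ := Gam_exists hr0 (γ y.1) (c y.1) (hγ y.1) ((y.2 : ℝ) * ((r : ℝ) - 1))
    rw [hs] at hij
    exact gm_ne (h1' y.1 a j i) (h2' _ _ _ _) (hgt_ne hr0 _ _ _) s hij
  have cv : Continuous fun y : U × unitInterval => y.1.1 :=
    continuous_subtype_val.comp continuous_fst
  have cW : ∀ i, Continuous fun y => W y i := fun i =>
    ((continuous_uC i).comp (cont_e _)).comp cv
  have ch : ∀ j, Continuous fun y : U × unitInterval => hgt hr0 y.1.1 j := fun j =>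
    (continuous_hgt hr0 j).comp cv
  have cn : ∀ p, Continuous fun y : U × unitInterval => nrm hr0 y.1.1 p := fun p =>
    (continuous_nrm hr0 p).comp cv
  have cc : ∀ j, Continuous fun y : U × unitInterval => c y.1 j := by
    intro j
    have : (fun y : U × unitInterval => c y.1 j) = fun y =>
      ((hgt hr0 y.1.1 j : ℝ) : ℂ) * Complex.I := by
      funext y
      apply Complex.ext <;> simp [c]
    rw [this]
    exact (Complex.continuous_ofReal.comp (ch j)).mul continuous_const
  have cZ : ∀ j, Continuous fun y => Z y j := by
    intro j
    refine Continuous.add (cW 0) (Continuous.mul ((continuous_scl hr0).comp cv) ?_)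
    unfold Gam
    refine (cc j).add (continuous_finsetSum _ fun a _ => Continuous.sub ?_ (cc j))
    refine continuous_gm (Complex.continuous_re.comp (cn _)) (Complex.continuous_im.comp (cn _))
      ((hX a j).comp continuous_fst) (ch j) ?_
    unfold rho
    fun_prop
  let G : C(U × unitInterval, Conf 2 (q + 2 + n)) :=
    ⟨fun y => mkConf (W y) (Z y) (hW y) (hZ y) (hZW y), continuous_mkConf W Z hW hZ hZW cW cZ⟩
  refine ⟨⟨fun x => ⟨G.curry x, ?_⟩, ?_⟩, ?_⟩
  · intro s t
    apply proj_eq_of_uC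
    intro i
    simp [G, W]
  · exact Continuous.subtype_mk G.curry.continuous _
  · intro x
    apply Subtype.ext
    funext a
    change mkConf (W (x, schedule r a)) (Z (x, schedule r a)) (hW _) (hZ _) (hZW _) = x.1.1 a
    apply conf_ext
    · intro i
      rw [uC_mkConf]
      exact uC_eq_of_proj (x.1.2 _ _) i
    · intro j
      rw [zC_mkConf]
      change uC (x.1.1 ⟨0, hr0⟩) 0 + scl hr0 x.1 *
        Gam (γ x) (c x) ((schedule r a : ℝ) * ((r : ℝ) - 1)) j = _
      rw [schedule_mul hr, Gam_at _ _ (hγ x), hγ0, raw_eq]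
      rfl

/-- the pieces -/
def piece (hr : 0 < r) (S : Setoid (PI' q n r)) : Set (ParamSpace (fnProj 2 (q + 2) n) r) :=
  {e | Good S (fun p => (nrm hr e p).re) ∧
    (∀ a j k, j ≠ k → S.r (Sum.inr (a, j)) (Sum.inr (a, k)) →
      (nrm hr e (Sum.inr (a, j))).im ≠ (nrm hr e (Sum.inr (a, k))).im) ∧
    (∀ a j i, S.r (Sum.inr (a, j)) (Sum.inl i) →
      (nrm hr e (Sum.inr (a, j))).im ≠ (nrm hr e (Sum.inl i)).im)}

lemma isOpen_piece (hr : 0 < r) (S : Setoid (PI' q n r)) : IsOpen (piece hr S) := by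
  have cr : ∀ p, Continuous fun e => (nrm (q := q) (n := n) hr e p).re := fun p =>
    Complex.continuous_re.comp (continuous_nrm hr p)
  have ci : ∀ p, Continuous fun e => (nrm (q := q) (n := n) hr e p).im := fun p =>
    Complex.continuous_im.comp (continuous_nrm hr p)
  unfold piece Good
  simp only [Set.setOf_and, Set.setOf_forall]
  refine IsOpen.inter ?_ (IsOpen.inter ?_ ?_)
  · refine isOpen_iInter_of_finite fun p => isOpen_iInter_of_finite fun p1 =>
      isOpen_iInter_of_finite fun p2 => isOpen_iInter_of_finite fun p3 =>
      isOpen_iInter_of_finite fun _ => isOpen_iInter_of_finite fun _ => ?_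
    exact isOpen_lt ((cr _).sub (cr _)).abs ((cr _).sub (cr _)).abs
  · refine isOpen_iInter_of_finite fun p => isOpen_iInter_of_finite fun p1 =>
      isOpen_iInter_of_finite fun p2 =>
      isOpen_iInter_of_finite fun _ => isOpen_iInter_of_finite fun _ => ?_
    exact isOpen_ne_fun (ci _) (ci _)
  · refine isOpen_iInter_of_finite fun p => isOpen_iInter_of_finite fun p1 =>
      isOpen_iInter_of_finite fun p2 => isOpen_iInter_of_finite fun _ => ?_
    exact isOpen_ne_fun (ci _) (ci _)

lemma piece_ker (hr : 0 < r) (e : ParamSpace (fnProj 2 (q + 2) n) r) :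
    e ∈ piece hr (Setoid.ker fun p => (nrm hr e p).re) := by
  refine ⟨good_ker _, ?_, ?_⟩
  · intro a j k hjk h h'
    exact nrm_z_ne hr e a hjk (Complex.ext h h')
  · intro a j i h h'
    exact nrm_u_ne hr e i a j (Complex.ext h h')

/-- target abscissa -/
noncomputable def tgt (hr : 0 < r) (S : Setoid (PI' q n r))
    (e : ParamSpace (fnProj 2 (q + 2) n) r) (a : Fin r) (j : Fin n) : ℝ :=
  top S (Sum.inr (a, j)) (fun p => (nrm hr e p).re) +
    gap S (fun p => (nrm hr e p).re) * (((j : ℕ) + 1) / (n + 1))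

lemma continuous_tgt (hr : 0 < r) (S : Setoid (PI' q n r)) (a : Fin r) (j : Fin n) :
    Continuous fun e => tgt hr S e a j := by
  have cr : ∀ p, Continuous fun e => (nrm (q := q) (n := n) hr e p).re := fun p =>
    Complex.continuous_re.comp (continuous_nrm hr p)
  exact (continuous_top S _ _ cr).add ((continuous_gap S _ cr).mul continuous_const)

lemma tgt_gt (hr : 0 < r) {S : Setoid (PI' q n r)} {e : ParamSpace (fnProj 2 (q + 2) n) r}
    (he : e ∈ piece hr S) (a : Fin r) (j : Fin n) :
    top S (Sum.inr (a, j)) (fun p => (nrm hr e p).re) < tgt hr S e a j := by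
  have := gap_pos he.1
  unfold tgt
  have h2 : (0 : ℝ) < ((j : ℕ) + 1) / (n + 1) := by positivity
  have := mul_pos this h2
  linarith

lemma tgt_lt (hr : 0 < r) {S : Setoid (PI' q n r)} {e : ParamSpace (fnProj 2 (q + 2) n) r}
    (he : e ∈ piece hr S) (a : Fin r) (j : Fin n) :
    tgt hr S e a j < top S (Sum.inr (a, j)) (fun p => (nrm hr e p).re) +
      gap S (fun p => (nrm hr e p).re) := by
  have := gap_pos he.1
  unfold tgt
  have h2 : ((j : ℕ) + 1 : ℝ) / (n + 1) < 1 := by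
    rw [div_lt_one (by positivity)]
    have : ((j : ℕ) : ℝ) < n := by exact_mod_cast j.2
    linarith
  have := mul_lt_mul_of_pos_left h2 this
  linarith

lemma tgt_lerp (hr : 0 < r) {S : Setoid (PI' q n r)} {e : ParamSpace (fnProj 2 (q + 2) n) r}
    (he : e ∈ piece hr S) (a : Fin r) (j : Fin n) (t : ℝ) (h0 : 0 ≤ t) (h1 : t ≤ 1) :
    (nrm hr e (Sum.inr (a, j))).re ≤ (nrm hr e (Sum.inr (a, j))).re +
      t * (tgt hr S e a j - (nrm hr e (Sum.inr (a, j))).re) ∧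
    (nrm hr e (Sum.inr (a, j))).re +
      t * (tgt hr S e a j - (nrm hr e (Sum.inr (a, j))).re) <
      top S (Sum.inr (a, j)) (fun p => (nrm hr e p).re) +
      gap S (fun p => (nrm hr e p).re) := by
  have a1 := tgt_gt hr he a j
  have a2 := tgt_lt hr he a j
  have a3 : (nrm hr e (Sum.inr (a, j))).re ≤ _ :=
    le_top (ξ := fun p => (nrm hr e p).re) (S.refl (Sum.inr (a, j)))
  have a4 : 0 ≤ tgt hr S e a j - (nrm hr e (Sum.inr (a, j))).re := by linarith
  have a5 := mul_nonneg h0 a4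
  have a6 := mul_le_mul_of_nonneg_right h1 a4
  constructor <;> linarith

lemma u_win (hr : 0 < r) {S : Setoid (PI' q n r)} {e : ParamSpace (fnProj 2 (q + 2) n) r}
    (he : e ∈ piece hr S) (p : PI' q n r) :
    (nrm hr e p).re < top S p (fun p => (nrm hr e p).re) + gap S (fun p => (nrm hr e p).re) := by
  have a3 : (nrm hr e p).re ≤ _ := le_top (ξ := fun p => (nrm hr e p).re) (S.refl p)
  have := gap_pos he.1
  linarith

lemma upper_bound (hr : 2 ≤ r) :
    HasSecatLE (paramEval (fnProj 2 (q + 2) n) r) (r * n + q) := by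
  classical
  have hr0 : 0 < r := by omega
  let U : Fin (r * n + q + 1) → Set (ParamSpace (fnProj 2 (q + 2) n) r) := fun k =>
    {e | ∃ S : Setoid (PI' q n r), Nat.card (Quotient S) = k.1 + 2 ∧ e ∈ piece hr0 S}
  refine ⟨U, ?_, ?_, ?_⟩
  · intro k
    have : U k = ⋃ S : {S : Setoid (PI' q n r) // Nat.card (Quotient S) = k.1 + 2},
        piece hr0 S.1 := by
      ext e
      simp [U]
    rw [this]
    exact isOpen_iUnion fun S => isOpen_piece hr0 S.1
  · rw [Set.eq_univ_iff_forall]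
    intro e
    rw [Set.mem_iUnion]
    let S : Setoid (PI' q n r) := Setoid.ker fun p => (nrm hr0 e p).re
    have hS2 : 2 ≤ Nat.card (Quotient S) := by
      have : Nontrivial (Quotient S) := by
        refine ⟨Quotient.mk S (Sum.inl 0), Quotient.mk S (Sum.inl 1), fun h => ?_⟩
        have h' : (nrm hr0 e (Sum.inl 0)).re = (nrm hr0 e (Sum.inl 1)).re := Quotient.exact h
        have e0 : nrm hr0 e (Sum.inl 0) = 0 := by simp [nrm, raw]
        have e1 : nrm hr0 e (Sum.inl 1) = 1 := div_self (scl_ne hr0 e)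
        rw [e0, e1] at h'
        simp at h'
      exact Finite.one_lt_card
    have hS1 : Nat.card (Quotient S) ≤ r * n + q + 2 := by
      have := Nat.card_le_card_of_surjective (Quotient.mk S) Quotient.mk_surjective
      simp at this
      simp
      omega
    exact ⟨⟨Nat.card (Quotient S) - 2, by omega⟩, S, (Nat.sub_add_cancel hS2).symm, piece_ker hr0 e⟩
  · intro k
    have hex : ∀ e : U k, ∃ S : Setoid (PI' q n r), Nat.card (Quotient S) = k.1 + 2 ∧
      e.1 ∈ piece hr0 S := fun e => e.2
    choose S hS1 hS2 using hex
    refine planner hr hr0 (U k) (fun e => tgt hr0 (S e) e.1) ?_ ?_ ?_ ?_ ?_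
    · intro a j
      rw [continuous_iff_continuousAt]
      intro e0
      have hc : ContinuousAt (fun e : U k => tgt hr0 (S e0) e.1 a j) e0 :=
        ((continuous_tgt hr0 (S e0) a j).comp continuous_subtype_val).continuousAt
      refine hc.congr ?_
      have hopen : IsOpen {e : U k | e.1 ∈ piece hr0 (S e0)} :=
        (isOpen_piece hr0 (S e0)).preimage continuous_subtype_val
      filter_upwards [hopen.mem_nhds (hS2 e0)] with e he
      rw [good_unique he.1 (hS2 e).1 ((hS1 e0).trans (hS1 e).symm)]
    · intro e a j k' hjk t h0 h1 h
      by_cases hs : (S e).r (Sum.inr (a, j)) (Sum.inr (a, k'))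
      · exact (hS2 e).2.1 a j k' hjk hs
      · exfalso
        obtain ⟨a1, a2⟩ := tgt_lerp hr0 (hS2 e) a j t h0 h1
        obtain ⟨b1, b2⟩ := tgt_lerp hr0 (hS2 e) a k' t h0 h1
        exact sep (hS2 e).1 hs a1 a2 b1 b2 h
    · intro e a j i t h0 h1 h
      by_cases hs : (S e).r (Sum.inr (a, j)) (Sum.inl i)
      · exact (hS2 e).2.2 a j i hs
      · exfalso
        obtain ⟨a1, a2⟩ := tgt_lerp hr0 (hS2 e) a j t h0 h1
        exact sep (hS2 e).1 hs a1 a2 le_rfl (u_win hr0 (hS2 e) _) h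
    · intro e a j k' hjk h
      by_cases hs : (S e).r (Sum.inr (a, j)) (Sum.inr (a, k'))
      · simp only [tgt] at h
        rw [top_eq hs] at h
        have h := mul_left_cancel₀ (gap_pos (hS2 e).1).ne' (add_left_cancel h)
        rw [div_left_inj' (by positivity)] at h
        have : ((j : ℕ) : ℝ) = (k' : ℕ) := by linarith
        exact hjk (Fin.ext (by exact_mod_cast this))
      · obtain ⟨a1, a2⟩ := tgt_lerp hr0 (hS2 e) a j 1 zero_le_one le_rfl
        obtain ⟨b1, b2⟩ := tgt_lerp hr0 (hS2 e) a k' 1 zero_le_one le_rfl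
        refine sep (hS2 e).1 hs a1 a2 b1 b2 ?_
        linarith
    · intro e a j i h
      by_cases hs : (S e).r (Sum.inr (a, j)) (Sum.inl i)
      · have a1 := tgt_gt hr0 (hS2 e) a j
        have a2 : (nrm hr0 e.1 (Sum.inl i)).re ≤ _ :=
          le_top (ξ := fun p => (nrm hr0 e.1 p).re) hs
        linarith
      · obtain ⟨a1, a2⟩ := tgt_lerp hr0 (hS2 e) a j 1 zero_le_one le_rfl
        refine sep (hS2 e).1 hs a1 a2 le_rfl (u_win hr0 (hS2 e) _) ?_
        linarith

end plan
end TCB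

/-- For the planar Fadell–Neuwirth fibration (`d = 2`), with `m ≥ 2`, `n ≥ 1`,
`r ≥ 2`: `TC_r[p] = rn + m - 2`. -/
theorem stmt17 (m n r : ℕ) (hm : 2 ≤ m) (hn : 1 ≤ n) (hr : 2 ≤ r) :
    seqParamTC (fnProj 2 m n) r = ((r * n + m - 2 : ℕ) : ℕ∞) := by
  obtain ⟨q, rfl⟩ : ∃ q, m = q + 2 := ⟨m - 2, by omega⟩
  have e : r * n + (q + 2) - 2 = r * n + q := by omega
  rw [e]
  unfold seqParamTC secat
  refine le_antisymm (iInf₂_le (r * n + q) (TCB.upper_bound hr)) (le_iInf₂ fun k hk => ?_)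
  exact_mod_cast TCB.lower_bound hn hr k hk
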